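/- arXiv:2205.12718 — 2 statements merged into one kernel-verified Lean document; each statement's English description precedes it below -/
import Mathlib

section
/- For real numbers μ₁, μ₂ and σ > 0, and any order α > 1, the Rényi divergence of order α between the one-dimensional Gaussian distributions N(μ₁, σ²) and N(μ₂, σ²) equals α(μ₁ − μ₂)²/(2σ²); that is, (1/(α − 1)) · log ∫_ℝ p(x)^α · q(x)^(1−α) dx = α(μ₁ − μ₂)²/(2σ²), where p and q are the probability density functions of N(μ₁, σ²) and N(μ₂, σ²) respectively. -/
open Real MeasureTheory

/-- The probability density function of the one-dimensional Gaussian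
distribution `N(μ, σ²)`. -/
noncomputable def gaussianPdf (μ σ x : ℝ) : ℝ :=
  (1 / (σ * Real.sqrt (2 * Real.pi))) * Real.exp (-(x - μ) ^ 2 / (2 * σ ^ 2))

/-!
For weights `α` and `1 - α`, completing the square shows that the geometric mixture
`p ^ α * q ^ (1 - α)` of two Gaussian densities of equal variance is again a Gaussian density of
that variance, up to a constant factor independent of `x`. As densities have total mass `1`, the
integral of the mixture is that factor.
-/

open ProbabilityTheory
open scoped NNReal

theorem mul_sq_sub_add_one_sub_mul_sq_sub {R : Type*} [CommRing R] (a b t x : R) :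
    t * (x - a) ^ 2 + (1 - t) * (x - b) ^ 2 =
      (x - (t * a + (1 - t) * b)) ^ 2 - t * (t - 1) * (a - b) ^ 2 := by
  ring

theorem mul_exp_rpow_mul_mul_exp_rpow_one_sub {c : ℝ} (hc : 0 ≤ c) (s t α : ℝ) :
    (c * exp s) ^ α * (c * exp t) ^ (1 - α) = c * exp (α * s + (1 - α) * t) := by
  have rpow_const : c ^ α * c ^ (1 - α) = c := by
    rw [← rpow_add' hc (by simp), add_sub_cancel, rpow_one]
  rw [mul_rpow hc (exp_nonneg s), mul_rpow hc (exp_nonneg t), mul_mul_mul_comm, rpow_const,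
    ← exp_mul, ← exp_mul, ← exp_add, mul_comm s, mul_comm t]

theorem gaussianPDFReal_rpow_mul_rpow_one_sub (μ₁ μ₂ : ℝ) (v : ℝ≥0) (α x : ℝ) :
    gaussianPDFReal μ₁ v x ^ α * gaussianPDFReal μ₂ v x ^ (1 - α) =
      exp (α * (α - 1) * (μ₁ - μ₂) ^ 2 / (2 * v)) *
        gaussianPDFReal (α * μ₁ + (1 - α) * μ₂) v x := by
  have exponent_eq :
      α * (-(x - μ₁) ^ 2 / (2 * v)) + (1 - α) * (-(x - μ₂) ^ 2 / (2 * v)) =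
        α * (α - 1) * (μ₁ - μ₂) ^ 2 / (2 * v) +
          -(x - (α * μ₁ + (1 - α) * μ₂)) ^ 2 / (2 * v) := by
    linear_combination -(mul_sq_sub_add_one_sub_mul_sq_sub μ₁ μ₂ α x) / (2 * (v : ℝ))
  simp only [gaussianPDFReal]
  rw [mul_exp_rpow_mul_mul_exp_rpow_one_sub (by positivity), exponent_eq, exp_add, mul_left_comm]

theorem integral_gaussianPDFReal_rpow_mul_rpow_one_sub (μ₁ μ₂ : ℝ) {v : ℝ≥0} (hv : v ≠ 0)
    (α : ℝ) :
    ∫ x, gaussianPDFReal μ₁ v x ^ α * gaussianPDFReal μ₂ v x ^ (1 - α) =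
      exp (α * (α - 1) * (μ₁ - μ₂) ^ 2 / (2 * v)) := by
  simp_rw [gaussianPDFReal_rpow_mul_rpow_one_sub]
  rw [integral_const_mul, integral_gaussianPDFReal_eq_one _ hv, mul_one]

theorem gaussianPdf_eq_gaussianPDFReal (μ : ℝ) (σ : ℝ≥0) (x : ℝ) :
    gaussianPdf μ σ x = gaussianPDFReal μ (σ ^ 2) x := by
  have sqrt_eq : √(2 * π * (σ : ℝ) ^ 2) = σ * √(2 * π) := by
    rw [sqrt_mul (by positivity), sqrt_sq σ.coe_nonneg, mul_comm]
  rw [gaussianPdf, gaussianPDFReal, NNReal.coe_pow, sqrt_eq, one_div]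

theorem renyiDiv_gaussian_eq_general (μ₁ μ₂ σ α : ℝ) (hσ : 0 < σ) (hα : α ≠ 1) :
    (1 / (α - 1)) *
      Real.log (∫ x : ℝ, gaussianPdf μ₁ σ x ^ α * gaussianPdf μ₂ σ x ^ (1 - α)) =
    α * (μ₁ - μ₂) ^ 2 / (2 * σ ^ 2) := by
  lift σ to ℝ≥0 using hσ.le
  have variance_ne_zero : σ ^ 2 ≠ 0 := pow_ne_zero 2 (NNReal.coe_pos.mp hσ).ne'
  have order_sub_one_ne_zero : α - 1 ≠ 0 := sub_ne_zero.mpr hα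
  simp_rw [gaussianPdf_eq_gaussianPDFReal]
  rw [integral_gaussianPDFReal_rpow_mul_rpow_one_sub μ₁ μ₂ variance_ne_zero, log_exp,
    NNReal.coe_pow]
  field_simp

/-- The Rényi divergence of order `α > 1` between the Gaussian distributions
`N(μ₁, σ²)` and `N(μ₂, σ²)` equals `α (μ₁ - μ₂)² / (2σ²)`. -/
theorem renyiDiv_gaussian_eq (μ₁ μ₂ σ α : ℝ) (hσ : 0 < σ) (hα : 1 < α) :
    (1 / (α - 1)) *
      Real.log (∫ x : ℝ, gaussianPdf μ₁ σ x ^ α * gaussianPdf μ₂ σ x ^ (1 - α)) =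
    α * (μ₁ - μ₂) ^ 2 / (2 * σ ^ 2) :=
  renyiDiv_gaussian_eq_general μ₁ μ₂ σ α hσ hα.ne'
end

section
/- (Privacy bound of the Gaussian mechanism, real-valued case.) Let f be a real-valued function of datasets with global sensitivity at most R > 0, i.e. |f(D) − f(D′)| ≤ R for every pair of adjacent datasets D, D′. For σ > 0, the Gaussian mechanism M(D) = f(D) + R·N(0, σ²), whose output distribution on input D is N(f(D), R²σ²), satisfies (α, α/(2σ²))-Rényi differential privacy for every α > 1: for all adjacent D, D′, the Rényi divergence of order α between N(f(D), R²σ²) and N(f(D′), R²σ²) is at most α/(2σ²). -/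
open Real MeasureTheory ProbabilityTheory

/-- The Rényi divergence of order `α` between measures `P` and `Q`:
`D_α(P‖Q) = (α - 1)⁻¹ · log ∫ (dP/dQ)^α dQ`. -/
noncomputable def renyiDiv {Ω : Type*} [MeasurableSpace Ω]
    (P Q : Measure Ω) (α : ℝ) : ℝ :=
  (α - 1)⁻¹ * Real.log (∫ x, (P.rnDeriv Q x).toReal ^ α ∂Q)

/-!
`N(a, v)` is the exponential tilt of `N(b, v)` with slope `t = (a - b) / v`. For any measure `Q` and
random variable `X`, the density of the tilt is `exp (t X) / mgf t`, so the Rényi divergence of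
order `α` from the tilt to `Q` only involves the cumulant generating function `K` of `X` under `Q`:
it equals `(K (α t) - α K t) / (α - 1)`. For a Gaussian `K` is quadratic, which gives the exact
value `α (a - b)² / (2 v)`, and the sensitivity bounds `(a - b)²` by `R²`.
-/

open scoped NNReal

section Tilted

variable {Ω : Type*} {mΩ : MeasurableSpace Ω} {μ : Measure Ω}

lemma mgf_tilted_mul_self (X : Ω → ℝ) (t s : ℝ) :
    mgf X (μ.tilted (t * X ·)) s = mgf X μ (t + s) / mgf X μ t := by
  simpa only [mgf, Pi.add_apply, add_mul] using integral_exp_tilted (t * X ·) (s * X ·)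

lemma integral_rnDeriv_tilted_left_self_rpow [SigmaFinite μ] {f : Ω → ℝ} (hf : AEMeasurable f μ)
    (α : ℝ) :
    ∫ x, ((μ.tilted f).rnDeriv μ x).toReal ^ α ∂μ =
      (∫ x, exp (α * f x) ∂μ) / (∫ x, exp (f x) ∂μ) ^ α := by
  rw [← integral_div]
  refine integral_congr_ae ?_
  filter_upwards [rnDeriv_tilted_left_self hf] with x hx
  rw [hx, ENNReal.toReal_ofReal (by positivity), div_rpow (by positivity) (by positivity),
    ← exp_mul, mul_comm]

lemma renyiDiv_tilted_mul_left [SigmaFinite μ] {X : Ω → ℝ} {t α : ℝ}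
    (ht : Integrable (fun ω ↦ exp (t * X ω)) μ)
    (hαt : Integrable (fun ω ↦ exp (α * t * X ω)) μ) :
    renyiDiv (μ.tilted (t * X ·)) μ α = (α - 1)⁻¹ * (cgf X μ (α * t) - α * cgf X μ t) := by
  rcases eq_zero_or_neZero μ with rfl | hμ
  · simp [renyiDiv]
  have htX : AEMeasurable (t * X ·) μ := aemeasurable_of_aemeasurable_exp ht.1.aemeasurable
  have hintegral : ∫ ω, ((μ.tilted (t * X ·)).rnDeriv μ ω).toReal ^ α ∂μ =
      mgf X μ (α * t) / mgf X μ t ^ α := by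
    simpa only [mgf, mul_assoc] using integral_rnDeriv_tilted_left_self_rpow htX α
  have hmgf : 0 < mgf X μ t := mgf_pos' hμ.out ht
  have hmgf_mul : 0 < mgf X μ (α * t) := mgf_pos' hμ.out hαt
  rw [renyiDiv, hintegral, log_div hmgf_mul.ne' (rpow_pos_of_pos hmgf α).ne', log_rpow hmgf,
    cgf, cgf]

end Tilted

lemma eq_of_mgf_id_eq {μ ν : Measure ℝ} [IsFiniteMeasure μ] [IsFiniteMeasure ν]
    (hμ : 0 ∈ interior (integrableExpSet id μ)) (h : mgf id μ = mgf id ν) : μ = ν := by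
  have hmass : μ.real Set.univ = ν.real Set.univ := by simpa using congrFun h 0
  have hzero : μ = 0 ↔ ν = 0 := by
    rw [← Measure.measure_univ_eq_zero, ← measureReal_eq_zero_iff, hmass, measureReal_eq_zero_iff,
      Measure.measure_univ_eq_zero]
  -- By analytic continuation, the mgf near `0` determines the characteristic function.
  refine Measure.ext_of_charFun (funext fun t ↦ ?_)
  rw [← complexMGF_id_mul_I, ← complexMGF_id_mul_I]
  exact eqOn_complexMGF_of_mgf' h hzero (by simpa using hμ)

lemma gaussianReal_tilted_mul (μ : ℝ) (v : ℝ≥0) (t : ℝ) :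
    (gaussianReal μ v).tilted (t * ·) = gaussianReal (μ + v * t) v := by
  symm
  have := isProbabilityMeasure_tilted (integrable_exp_mul_gaussianReal (μ := μ) (v := v) t)
  refine eq_of_mgf_id_eq (by simp) (funext fun s ↦ ?_)
  calc mgf id (gaussianReal (μ + v * t) v) s
      = exp (μ * (t + s) + v * (t + s) ^ 2 / 2 - (μ * t + v * t ^ 2 / 2)) := by
        rw [mgf_id_gaussianReal]
        ring_nf
    _ = mgf id (gaussianReal μ v) (t + s) / mgf id (gaussianReal μ v) t := by
        rw [exp_sub, mgf_id_gaussianReal]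
    _ = mgf id ((gaussianReal μ v).tilted (t * ·)) s := (mgf_tilted_mul_self id t s).symm

lemma renyiDiv_gaussianReal (a b : ℝ) {v : ℝ≥0} (hv : v ≠ 0) {α : ℝ} (hα : α ≠ 1) :
    renyiDiv (gaussianReal a v) (gaussianReal b v) α = α * (a - b) ^ 2 / (2 * v) := by
  have htilt : gaussianReal a v = (gaussianReal b v).tilted ((a - b) / v * ·) := by
    rw [gaussianReal_tilted_mul, mul_div_cancel₀ _ (by exact_mod_cast hv), add_sub_cancel]
  have hcgf (s : ℝ) : cgf (fun x ↦ x) (gaussianReal b v) s = b * s + v * s ^ 2 / 2 :=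
    cgf_gaussianReal Measure.map_id' s
  rw [htilt, renyiDiv_tilted_mul_left (integrable_exp_mul_gaussianReal _)
    (integrable_exp_mul_gaussianReal _), hcgf, hcgf]
  have : α - 1 ≠ 0 := sub_ne_zero.mpr hα
  field_simp
  ring

theorem gaussian_mechanism_renyiDP_general {Dataset : Type*}
    (Adjacent : Dataset → Dataset → Prop) (f : Dataset → ℝ)
    (R σ : ℝ) (hR : 0 < R) (hσ : 0 < σ)
    (hsens : ∀ D D', Adjacent D D' → |f D - f D'| ≤ R) :
    ∀ α : ℝ, 0 ≤ α → α ≠ 1 → ∀ D D', Adjacent D D' →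
      renyiDiv (gaussianReal (f D) (Real.toNNReal (R ^ 2 * σ ^ 2)))
        (gaussianReal (f D') (Real.toNNReal (R ^ 2 * σ ^ 2))) α ≤
      α / (2 * σ ^ 2) := by
  intro α hα₀ hα₁ D D' hadj
  have hvar : 0 < R ^ 2 * σ ^ 2 := by positivity
  rw [renyiDiv_gaussianReal _ _ (toNNReal_pos.mpr hvar).ne' hα₁, coe_toNNReal _ hvar.le]
  calc α * (f D - f D') ^ 2 / (2 * (R ^ 2 * σ ^ 2))
      ≤ α * R ^ 2 / (2 * (R ^ 2 * σ ^ 2)) := by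
        gcongr α * ?_ / _
        exact sq_le_sq.mpr ((hsens D D' hadj).trans (le_abs_self R))
    _ = α / (2 * σ ^ 2) := by field_simp

/-- Privacy bound of the Gaussian mechanism (real-valued case): if `f` has global
sensitivity at most `R` with respect to an adjacency relation, then the mechanism
`D ↦ N(f(D), R²σ²)` satisfies `(α, α/(2σ²))`-Rényi differential privacy for
every `α > 1`. -/
theorem gaussian_mechanism_renyiDP {Dataset : Type*}
    (Adjacent : Dataset → Dataset → Prop) (f : Dataset → ℝ)
    (R σ : ℝ) (hR : 0 < R) (hσ : 0 < σ)
    (hsens : ∀ D D', Adjacent D D' → |f D - f D'| ≤ R) :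
    ∀ α : ℝ, 1 < α → ∀ D D', Adjacent D D' →
      renyiDiv (gaussianReal (f D) (Real.toNNReal (R ^ 2 * σ ^ 2)))
        (gaussianReal (f D') (Real.toNNReal (R ^ 2 * σ ^ 2))) α ≤
      α / (2 * σ ^ 2) :=
  fun α hα ↦ gaussian_mechanism_renyiDP_general Adjacent f R σ hR hσ hsens α (by linarith) hα.ne'
end
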